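/- arXiv:2507.19998 — 2 statements merged into one kernel-verified Lean document; each statement's English description precedes it below -/
import Mathlib

section
/- Let a ≥ 0. There exists a constant C(a) > 0 such that for every t ≠ 0 and every measurable φ : (0,∞) → ℂ with ∫₀^∞ |φ(y)| y^a dy < ∞, one has sup_{x>0} |S_a(t)φ(x)| ≤ C(a) |t|^{−(a+1)/2} ∫₀^∞ |φ(y)| y^a dy. -/
open MeasureTheory Filter Set

noncomputable def besselJ (ν : ℂ) (z : ℝ) : ℂ :=
  ∑' k : ℕ, ((-1 : ℂ) ^ k / (Complex.Gamma (k + 1) * Complex.Gamma (ν + k + 1))) *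
    ((z : ℂ) / 2) ^ (2 * (k : ℂ) + ν)

noncomputable def Skernel (a x y t : ℝ) : ℂ :=
  if 0 < t then
    Complex.exp (-(Complex.I) * (((a + 1) * Real.pi / 4 : ℝ) : ℂ)) *
      (((2 * |t|) ^ (-(a + 1) / 2) : ℝ) : ℂ) *
      (((x * y / (2 * |t|)) ^ ((1 - a) / 2) : ℝ) : ℂ) *
      besselJ (((a - 1) / 2 : ℝ) : ℂ) (x * y / (2 * |t|)) *
      Complex.exp (Complex.I * ((((x ^ 2 + y ^ 2) / (4 * |t|)) : ℝ) : ℂ))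
  else
    Complex.exp ((Complex.I) * (((a + 1) * Real.pi / 4 : ℝ) : ℂ)) *
      (((2 * |t|) ^ (-(a + 1) / 2) : ℝ) : ℂ) *
      (((x * y / (2 * |t|)) ^ ((1 - a) / 2) : ℝ) : ℂ) *
      besselJ (((a - 1) / 2 : ℝ) : ℂ) (x * y / (2 * |t|)) *
      Complex.exp (-(Complex.I) * ((((x ^ 2 + y ^ 2) / (4 * |t|)) : ℝ) : ℂ))

noncomputable def Sop (a t : ℝ) (φ : ℝ → ℂ) (x : ℝ) : ℂ :=
  ∫ y in Ioi (0:ℝ), Skernel a x y t * φ y * ((y ^ a : ℝ) : ℂ)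

/-- The entire function `∑ (-w)^k / (k! Γ(b + k))`, equal to `(z/2)^(-ν) J_ν(z)` at
`b = ν + 1`, `w = z²/4`. -/
noncomputable def besselClifford (b w : ℝ) : ℝ :=
  ∑' k : ℕ, (-w) ^ k / (k.factorial * Real.Gamma (b + k))

theorem Gamma_mul_pow_le_Gamma_add_natCast {b : ℝ} (hb : 0 < b) (k : ℕ) :
    Real.Gamma b * b ^ k ≤ Real.Gamma (b + k) := by
  induction k with
  | zero => simp
  | succ k ih =>
    have hbk : 0 < b + k := by positivity
    have hrec : Real.Gamma (b + (k + 1 : ℕ)) = (b + k) * Real.Gamma (b + k) := by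
      rw [← Real.Gamma_add_one hbk.ne']
      push_cast
      ring_nf
    rw [hrec, pow_succ, ← mul_assoc, mul_comm]
    have hk : b ≤ b + k := by simp
    gcongr

theorem pow_div_factorial_mul_Gamma_le {b R : ℝ} (hb : 0 < b) (hR : 0 ≤ R) (k : ℕ) :
    R ^ k / (k.factorial * Real.Gamma (b + k)) ≤
      (Real.Gamma b)⁻¹ * ((R / b) ^ k / k.factorial) := by
  have hG := Real.Gamma_pos_of_pos hb
  calc R ^ k / (k.factorial * Real.Gamma (b + k))
      ≤ R ^ k / (k.factorial * (Real.Gamma b * b ^ k)) := by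
        have := Gamma_mul_pow_le_Gamma_add_natCast hb k
        gcongr
    _ = (Real.Gamma b)⁻¹ * ((R / b) ^ k / k.factorial) := by
        rw [div_pow]
        field_simp

theorem norm_neg_pow_div_factorial_mul_Gamma {b : ℝ} (hb : 0 < b) (w : ℝ) (k : ℕ) :
    ‖(-w) ^ k / (k.factorial * Real.Gamma (b + k))‖ =
      |w| ^ k / (k.factorial * Real.Gamma (b + k)) := by
  have hG : 0 < Real.Gamma (b + k) := Real.Gamma_pos_of_pos (by positivity)
  rw [norm_div, norm_pow, norm_neg, Real.norm_eq_abs, Real.norm_of_nonneg (by positivity)]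

theorem summable_besselClifford {b : ℝ} (hb : 0 < b) (w : ℝ) :
    Summable fun k : ℕ => (-w) ^ k / (k.factorial * Real.Gamma (b + k)) := by
  refine Summable.of_norm_bounded
    ((Real.summable_pow_div_factorial (|w| / b)).mul_left (Real.Gamma b)⁻¹) fun k => ?_
  rw [norm_neg_pow_div_factorial_mul_Gamma hb]
  exact pow_div_factorial_mul_Gamma_le hb (abs_nonneg w) k

theorem besselClifford_zero (b : ℝ) : besselClifford b 0 = (Real.Gamma b)⁻¹ := by
  rw [besselClifford, tsum_eq_single 0 (by intro k hk; simp [hk])]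
  simp

theorem hasDerivAt_besselClifford {b : ℝ} (hb : 0 < b) (w : ℝ) :
    HasDerivAt (besselClifford b) (-besselClifford (b + 1) w) w := by
  set R : ℝ := |w| + 1
  have hshift : ∀ (v : ℝ) (k : ℕ),
      ((k + 1 : ℕ) * (-v) ^ (k + 1 - 1) * -1) /
          ((k + 1).factorial * Real.Gamma (b + (k + 1 : ℕ))) =
        -((-v) ^ k / (k.factorial * Real.Gamma (b + 1 + k))) := by
    intro v k
    have hG : 0 < Real.Gamma (b + 1 + k) := Real.Gamma_pos_of_pos (by positivity)
    have harg : b + ((k + 1 : ℕ) : ℝ) = b + 1 + k := by push_cast; ring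
    rw [harg, Nat.factorial_succ, Nat.add_sub_cancel]
    push_cast
    field_simp
  have hu : Summable fun k : ℕ => (k : ℝ) * R ^ (k - 1) /
      (k.factorial * Real.Gamma (b + k)) := by
    rw [← summable_nat_add_iff 1]
    refine (summable_besselClifford (b := b + 1) (by positivity) (-R)).congr fun k => ?_
    have := hshift (-R) k
    rw [neg_neg] at this ⊢
    rw [← neg_inj, ← this]
    ring
  have hderiv := hasDerivAt_tsum_of_isPreconnected
    (g := fun (k : ℕ) (v : ℝ) => (-v) ^ k / (k.factorial * Real.Gamma (b + k)))
    (g' := fun (k : ℕ) (v : ℝ) => (k * (-v) ^ (k - 1) * -1) /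
      (k.factorial * Real.Gamma (b + k)))
    (t := Metric.ball 0 R) (y₀ := w) (y := w) hu Metric.isOpen_ball
    (convex_ball 0 R).isPreconnected
    (fun k v _ => ((hasDerivAt_neg v).pow k).div_const _)
    (fun k v hv => ?_) (by simp [R]) (summable_besselClifford hb w) (by simp [R])
  · refine hderiv.congr_deriv ?_
    have hs : Summable fun k : ℕ => ((k : ℝ) * (-w) ^ (k - 1) * -1) /
        (k.factorial * Real.Gamma (b + k)) := by
      rw [← summable_nat_add_iff 1]
      simp_rw [hshift]
      exact (summable_besselClifford (b := b + 1) (by positivity) w).neg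
    rw [hs.tsum_eq_zero_add]
    simp_rw [hshift]
    rw [tsum_neg]
    simp [besselClifford]
  · have hG : 0 < Real.Gamma (b + k) := Real.Gamma_pos_of_pos (by positivity)
    have hv : |v| ≤ R := by simpa using (Metric.mem_ball.mp hv).le
    rw [norm_div, norm_mul, norm_mul, norm_pow, norm_neg, norm_neg, norm_one, mul_one,
      Real.norm_natCast, Real.norm_eq_abs,
      Real.norm_of_nonneg (show (0 : ℝ) ≤ k.factorial * Real.Gamma (b + k) by positivity)]
    gcongr

theorem besselClifford_contiguous {b : ℝ} (hb : 0 < b) (w : ℝ) :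
    w * besselClifford (b + 2) w = b * besselClifford (b + 1) w - besselClifford b w := by
  have h0 := summable_besselClifford hb w
  have h1 := (summable_besselClifford (b := b + 1) (by positivity) w).mul_left b
  simp only [besselClifford]
  rw [← tsum_mul_left, ← tsum_mul_left, ← h1.tsum_sub h0, (h1.sub h0).tsum_eq_zero_add]
  have hG0 : Real.Gamma b ≠ 0 := (Real.Gamma_pos_of_pos hb).ne'
  have hzero : b * ((-w) ^ 0 / ((Nat.factorial 0 : ℕ) * Real.Gamma (b + 1 + (0 : ℕ)))) -
      (-w) ^ 0 / ((Nat.factorial 0 : ℕ) * Real.Gamma (b + (0 : ℕ))) = 0 := by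
    simp only [pow_zero, Nat.factorial_zero, Nat.cast_one, Nat.cast_zero, add_zero, one_mul]
    rw [Real.Gamma_add_one hb.ne']
    field_simp
    ring
  rw [hzero, zero_add]
  refine tsum_congr fun k => ?_
  have hpos : 0 < b + 1 + k := by positivity
  have hG : Real.Gamma (b + 1 + k) ≠ 0 := (Real.Gamma_pos_of_pos hpos).ne'
  have harg : b + ((k + 1 : ℕ) : ℝ) = b + 1 + k := by push_cast; ring
  have hrec : Real.Gamma (b + 2 + k) = (b + 1 + k) * Real.Gamma (b + 1 + k) := by
    rw [← Real.Gamma_add_one hpos.ne']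
    ring_nf
  have hrec' : Real.Gamma (b + 1 + (k + 1 : ℕ)) = (b + 1 + k) * Real.Gamma (b + 1 + k) := by
    rw [← Real.Gamma_add_one hpos.ne']
    push_cast
    ring_nf
  rw [hrec, hrec', harg, Nat.factorial_succ]
  push_cast
  field_simp
  ring

/-- The energy `g_b² + w g_{b+1}²` is nonincreasing for `b ≥ 1/2`. -/
theorem abs_besselClifford_le {b w : ℝ} (hb : 1 / 2 ≤ b) (hw : 0 ≤ w) :
    |besselClifford b w| ≤ (Real.Gamma b)⁻¹ := by
  have hb0 : 0 < b := by linarith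
  have hE : ∀ v : ℝ, HasDerivAt
      (fun v => besselClifford b v ^ 2 + v * besselClifford (b + 1) v ^ 2)
      ((1 - 2 * b) * besselClifford (b + 1) v ^ 2) v := by
    intro v
    have h0 := (hasDerivAt_besselClifford hb0 v).pow 2
    have h1 := (hasDerivAt_id v).mul
      ((hasDerivAt_besselClifford (b := b + 1) (by positivity) v).pow 2)
    have hc := besselClifford_contiguous hb0 v
    refine (h0.add h1).congr_deriv ?_
    rw [show b + 1 + 1 = b + 2 by ring]
    simp only [id, Pi.pow_apply]
    push_cast
    linear_combination -2 * besselClifford (b + 1) v * hc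
  have hanti := antitone_of_hasDerivAt_nonpos hE fun v =>
    mul_nonpos_of_nonpos_of_nonneg (by linarith) (sq_nonneg _)
  have hle := hanti hw
  simp only [besselClifford_zero, zero_mul, add_zero] at hle
  refine abs_le_of_sq_le_sq ?_ (inv_nonneg.mpr (Real.Gamma_pos_of_pos hb0).le)
  nlinarith [mul_nonneg hw (sq_nonneg (besselClifford (b + 1) w))]

theorem besselJ_ofReal (ν : ℝ) {z : ℝ} (hz : 0 < z) :
    besselJ (ν : ℂ) z = (((z / 2) ^ ν * besselClifford (ν + 1) (z ^ 2 / 4) : ℝ) : ℂ) := by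
  rw [besselClifford, ← tsum_mul_left, Complex.ofReal_tsum, besselJ]
  refine tsum_congr fun k => ?_
  have hz2 : (0 : ℝ) < z / 2 := by positivity
  have hpow : ((z : ℂ) / 2) ^ (2 * (k : ℂ) + ν) =
      (((z / 2) ^ (2 * k) * (z / 2) ^ ν : ℝ) : ℂ) := by
    rw [← Real.rpow_natCast (z / 2) (2 * k), ← Real.rpow_add hz2,
      Complex.ofReal_cpow hz2.le]
    push_cast
    rfl
  have hG : Complex.Gamma (ν + k + 1) = (Real.Gamma (ν + 1 + k) : ℂ) := by
    rw [← Complex.Gamma_ofReal]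
    push_cast
    ring_nf
  rw [hpow, hG, Complex.Gamma_nat_eq_factorial, show -(z ^ 2 / 4) = -1 * (z / 2) ^ 2 by ring,
    mul_pow, ← pow_mul]
  push_cast
  ring

theorem norm_rpow_mul_besselJ_le {a z : ℝ} (ha : 0 ≤ a) (hz : 0 < z) :
    ‖((z ^ ((1 - a) / 2) : ℝ) : ℂ) * besselJ (((a - 1) / 2 : ℝ) : ℂ) z‖ ≤
      2 ^ ((1 - a) / 2) * (Real.Gamma ((a + 1) / 2))⁻¹ := by
  have hscale : z ^ ((1 - a) / 2) * (z / 2) ^ ((a - 1) / 2) = 2 ^ ((1 - a) / 2) := by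
    rw [show (a - 1) / 2 = -((1 - a) / 2) by ring, Real.rpow_neg (by positivity),
      Real.div_rpow hz.le zero_le_two]
    have := (Real.rpow_pos_of_pos hz ((1 - a) / 2)).ne'
    field_simp
  rw [besselJ_ofReal _ hz, ← Complex.ofReal_mul, ← mul_assoc, hscale, Complex.norm_real,
    norm_mul, Real.norm_of_nonneg (by positivity), Real.norm_eq_abs,
    show (a - 1) / 2 + 1 = (a + 1) / 2 by ring]
  gcongr
  exact abs_besselClifford_le (by linarith) (by positivity)

theorem norm_Skernel_le {a x y t : ℝ} (ha : 0 ≤ a) (hx : 0 < x) (hy : 0 < y) (ht : t ≠ 0) :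
    ‖Skernel a x y t‖ ≤ (2 ^ (-(a + 1) / 2) *
      (2 ^ ((1 - a) / 2) * (Real.Gamma ((a + 1) / 2))⁻¹)) * |t| ^ (-(a + 1) / 2) := by
  have hz : 0 < x * y / (2 * |t|) := by positivity
  have hF := norm_rpow_mul_besselJ_le ha hz
  have hphase : ∀ r : ℝ, ‖Complex.exp (Complex.I * r)‖ = 1 := fun r => by
    rw [mul_comm, Complex.norm_exp_ofReal_mul_I]
  have hphase' : ∀ r : ℝ, ‖Complex.exp (-Complex.I * r)‖ = 1 := fun r => by
    simpa using hphase (-r)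
  have hnorm : ‖Skernel a x y t‖ = (2 * |t|) ^ (-(a + 1) / 2) *
      ‖(((x * y / (2 * |t|)) ^ ((1 - a) / 2) : ℝ) : ℂ) *
        besselJ (((a - 1) / 2 : ℝ) : ℂ) (x * y / (2 * |t|))‖ := by
    have hr : ‖(((2 * |t|) ^ (-(a + 1) / 2) : ℝ) : ℂ)‖ = (2 * |t|) ^ (-(a + 1) / 2) := by
      rw [Complex.norm_real, Real.norm_of_nonneg (by positivity)]
    unfold Skernel
    split_ifs <;> simp only [norm_mul, hphase, hphase', hr, one_mul, mul_one, mul_assoc]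
  rw [hnorm, Real.mul_rpow zero_le_two (abs_nonneg t), mul_right_comm]
  gcongr

/-- Dispersive estimate for `a ≥ 0`:
`sup_{x>0} |S_a(t)φ(x)| ≤ C(a) |t|^{-(a+1)/2} ‖φ‖_{L¹_a}`. -/
theorem dispersive_estimate (a : ℝ) (ha : 0 ≤ a) :
    ∃ C > (0:ℝ), ∀ t : ℝ, t ≠ 0 → ∀ φ : ℝ → ℂ, Measurable φ →
      IntegrableOn (fun y => ‖φ y‖ * y ^ a) (Ioi 0) →
      ∀ x > (0:ℝ),
        ‖Sop a t φ x‖ ≤ C * |t| ^ (-(a + 1) / 2) * ∫ y in Ioi (0:ℝ), ‖φ y‖ * y ^ a := by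
  have hG : 0 < Real.Gamma ((a + 1) / 2) := Real.Gamma_pos_of_pos (by positivity)
  refine ⟨2 ^ (-(a + 1) / 2) * (2 ^ ((1 - a) / 2) * (Real.Gamma ((a + 1) / 2))⁻¹),
    by positivity, fun t ht φ _ hφ x hx => ?_⟩
  rw [← integral_const_mul]
  refine (norm_integral_le_integral_norm _).trans
    (integral_mono_of_nonneg (ae_of_all _ fun _ => norm_nonneg _) (hφ.const_mul _) ?_)
  filter_upwards [ae_restrict_mem measurableSet_Ioi] with y hy
  have hy : 0 < y := hy
  rw [norm_mul, norm_mul, Complex.norm_real, Real.norm_of_nonneg (by positivity), mul_assoc]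
  gcongr
  exact norm_Skernel_le ha hx hy ht
end

section
/- Let −1 < a < 0. There exists a constant C(a) > 0 such that for every t ≠ 0 and every measurable φ : (0,∞) → ℂ with ∫₀^∞ |φ(y)| u₁(y) dy < ∞, one has sup_{x>0} |S_a(t)φ(x) · k₁(x)| ≤ C(a) (|t|^{−(a+1)/2} + |t|^{−1/2}) ∫₀^∞ |φ(y)| u₁(y) dy. -/
open MeasureTheory Filter Set

noncomputable def k1 (a x : ℝ) : ℝ := min 1 (x ^ (a / 2))

noncomputable def u1 (a x : ℝ) : ℝ := max (x ^ (a / 2)) (x ^ a)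

/-- Coefficients of the entire function `s ↦ (√s) ^ (-μ) * J_μ (2 √s)`. -/
noncomputable def besselCoeff (μ : ℝ) (k : ℕ) : ℝ :=
  (-1) ^ k / (Real.Gamma (k + 1) * Real.Gamma (μ + k + 1))

/-- The entire function `s ↦ (√s) ^ (-μ) * J_μ (2 √s)`. -/
noncomputable def besselEntire (μ s : ℝ) : ℝ := ∑' k : ℕ, besselCoeff μ k * s ^ k

lemma besselCoeff_ne_zero {μ : ℝ} (hμ : -1 < μ) (k : ℕ) : besselCoeff μ k ≠ 0 := by
  have hk : (0 : ℝ) ≤ k := k.cast_nonneg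
  have h1 := Real.Gamma_pos_of_pos (s := k + 1) (by linarith)
  have h2 := Real.Gamma_pos_of_pos (s := μ + k + 1) (by linarith)
  exact div_ne_zero (by simp) (by positivity)

lemma besselCoeff_succ {μ : ℝ} (hμ : -1 < μ) (k : ℕ) :
    besselCoeff μ (k + 1) * ((k + 1) * (μ + k + 1)) = -besselCoeff μ k := by
  have hk : (0 : ℝ) ≤ k := k.cast_nonneg
  have h1 := Real.Gamma_pos_of_pos (s := k + 1) (by linarith)
  have h2 := Real.Gamma_pos_of_pos (s := μ + k + 1) (by linarith)
  have h3 : (k : ℝ) + 1 ≠ 0 := by linarith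
  have h4 : μ + k + 1 ≠ 0 := by linarith
  have e1 := Real.Gamma_add_one h3
  have e2 := Real.Gamma_add_one h4
  unfold besselCoeff
  push_cast
  rw [e1, show μ + ((k : ℝ) + 1) + 1 = (μ + k + 1) + 1 by ring, e2, pow_succ]
  field_simp

lemma besselCoeff_succ_mul {μ : ℝ} (k : ℕ) :
    besselCoeff μ (k + 1) * (k + 1) = -besselCoeff (μ + 1) k := by
  have h3 : (k : ℝ) + 1 ≠ 0 := by positivity
  have h1 := Real.Gamma_pos_of_pos (s := k + 1) (by positivity)
  unfold besselCoeff
  push_cast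
  rw [Real.Gamma_add_one h3, show μ + ((k : ℝ) + 1) + 1 = μ + 1 + k + 1 by ring, pow_succ]
  rcases eq_or_ne (Real.Gamma (μ + 1 + k + 1)) 0 with h | h
  · simp [h]
  · field_simp

lemma summable_besselCoeff {μ : ℝ} (hμ : -1 < μ) (s : ℝ) :
    Summable fun k : ℕ => besselCoeff μ k * s ^ k := by
  rcases eq_or_ne s 0 with rfl | hs
  · exact summable_of_ne_finset_zero (s := {0}) fun k hk => by
      simp [zero_pow (by simpa using hk)]
  refine summable_of_ratio_test_tendsto_lt_one (l := 0) one_pos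
    (Eventually.of_forall fun k => mul_ne_zero (besselCoeff_ne_zero hμ k) (pow_ne_zero k hs)) ?_
  have key : ∀ k : ℕ, ‖besselCoeff μ (k + 1) * s ^ (k + 1)‖ / ‖besselCoeff μ k * s ^ k‖
      = |s| / ((k + 1) * (μ + k + 1)) := by
    intro k
    have hk : (0 : ℝ) ≤ k := k.cast_nonneg
    have h3 : (0 : ℝ) < k + 1 := by linarith
    have h4 : 0 < μ + k + 1 := by linarith
    have h5 := abs_pos.2 (besselCoeff_ne_zero hμ k)
    have h6 := abs_pos.2 hs
    have h7 : |besselCoeff μ (k + 1)| * ((k + 1) * (μ + k + 1)) = |besselCoeff μ k| := by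
      rw [← abs_neg (besselCoeff μ k), ← besselCoeff_succ hμ k, abs_mul,
        abs_of_pos (mul_pos h3 h4)]
    have h8 : s ^ k ≠ 0 := pow_ne_zero k hs
    rw [norm_mul, norm_mul, norm_pow, norm_pow, Real.norm_eq_abs, Real.norm_eq_abs,
      Real.norm_eq_abs, div_eq_div_iff (by positivity) (by positivity), ← h7, pow_succ]
    ring
  simp_rw [key]
  refine Tendsto.div_atTop tendsto_const_nhds ?_
  refine Tendsto.atTop_mul_atTop₀ ?_ ?_
  · exact tendsto_atTop_add_const_right _ _ tendsto_natCast_atTop_atTop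
  · exact tendsto_atTop_add_const_right _ _
      (tendsto_atTop_add_const_left _ _ tendsto_natCast_atTop_atTop)

lemma hasDerivAt_besselEntire {μ : ℝ} (hμ : -1 < μ) (s : ℝ) :
    HasDerivAt (besselEntire μ) (-besselEntire (μ + 1) s) s := by
  set R := |s| + 1 with hR
  have hR0 : 0 ≤ R := by positivity
  have hsum : Summable fun k : ℕ => |besselCoeff μ k| * (k * R ^ (k - 1)) := by
    rw [← summable_nat_add_iff 1]
    refine ((summable_besselCoeff (μ := μ + 1) (by linarith) R).abs).congr fun k => ?_
    have := besselCoeff_succ_mul (μ := μ) k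
    rw [abs_mul, ← abs_neg (besselCoeff (μ + 1) k), ← this, abs_mul, abs_pow,
      abs_of_nonneg hR0, abs_of_nonneg (by positivity : (0 : ℝ) ≤ k + 1)]
    push_cast
    ring
  have h := hasDerivAt_tsum_of_isPreconnected (𝕜 := ℝ) (t := Metric.ball 0 R) (y₀ := 0) (y := s)
    (g := fun (k : ℕ) (x : ℝ) => besselCoeff μ k * x ^ k)
    (g' := fun (k : ℕ) (x : ℝ) => besselCoeff μ k * (k * x ^ (k - 1)))
    hsum Metric.isOpen_ball (convex_ball _ _).isPreconnected
    (fun k x _ => (hasDerivAt_pow k x).const_mul _)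
    (fun k x hx => by
      have hx' : |x| ≤ R := by simpa using (mem_ball_zero_iff.1 hx).le
      rw [norm_mul, norm_mul, norm_pow, Real.norm_eq_abs, Real.norm_eq_abs, Real.norm_eq_abs,
        Nat.abs_cast]
      gcongr)
    (Metric.mem_ball_self (by positivity)) (summable_besselCoeff hμ 0)
    (mem_ball_zero_iff.2 (by simp [hR]))
  refine h.congr_deriv ?_
  have hs : Summable fun k : ℕ => besselCoeff μ k * (k * s ^ (k - 1)) := by
    refine Summable.of_norm_bounded hsum fun k => ?_
    rw [norm_mul, norm_mul, norm_pow, Real.norm_eq_abs, Real.norm_eq_abs, Real.norm_eq_abs,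
      Nat.abs_cast]
    gcongr
    linarith
  rw [hs.tsum_eq_zero_add]
  simp only [besselEntire, ← tsum_neg, Nat.cast_zero, zero_mul, mul_zero, zero_add,
    Nat.add_sub_cancel]
  refine tsum_congr fun k => ?_
  rw [← neg_mul, ← besselCoeff_succ_mul]
  push_cast
  ring

lemma besselEntire_recurrence {μ : ℝ} (hμ : -1 < μ) (s : ℝ) :
    s * besselEntire (μ + 2) s = (μ + 1) * besselEntire (μ + 1) s - besselEntire μ s := by
  have s0 := summable_besselCoeff hμ s
  have s1 := summable_besselCoeff (μ := μ + 1) (by linarith) s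
  have hcoef : ∀ k : ℕ, (μ + 1) * besselCoeff (μ + 1) k - besselCoeff μ k
      = -(k * besselCoeff (μ + 1) k) := by
    intro k
    rw [← neg_eq_iff_eq_neg.2 (besselCoeff_succ_mul (μ := μ) k),
      ← neg_eq_iff_eq_neg.2 (besselCoeff_succ hμ k)]
    ring
  have hd := (s1.mul_left (μ + 1)).sub s0
  simp only [besselEntire]
  rw [← tsum_mul_left, ← tsum_mul_left, ← (s1.mul_left (μ + 1)).tsum_sub s0,
    hd.tsum_eq_zero_add]
  have h0 := hcoef 0
  simp only [Nat.cast_zero, zero_mul, neg_zero] at h0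
  rw [show (μ + 1) * (besselCoeff (μ + 1) 0 * s ^ 0) - besselCoeff μ 0 * s ^ 0 = 0 by
    simpa using h0, zero_add]
  refine tsum_congr fun k => ?_
  have h1 := hcoef (k + 1)
  have h2 := besselCoeff_succ_mul (μ := μ + 1) k
  rw [show μ + 1 + 1 = μ + 2 by ring] at h2
  push_cast at h1
  rw [pow_succ]
  linear_combination (-s ^ k * s) * h1 + s ^ k * s * h2

/-- Energy bound for solutions of `u'' = (c / z ^ 2 - 1) u`. -/
lemma sq_le_of_second_order_ode {c : ℝ} (hc : 0 ≤ c) {u v : ℝ → ℝ}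
    (hu : ∀ z > 0, HasDerivAt u (v z) z)
    (hv : ∀ z > 0, HasDerivAt v ((c / z ^ 2 - 1) * u z) z) {z : ℝ} (hz : 1 ≤ z) :
    u z ^ 2 ≤ (u 1 ^ 2 + v 1 ^ 2) * Real.exp c := by
  set H : ℝ → ℝ := fun z => (u z ^ 2 + v z ^ 2) * Real.exp (c * z⁻¹)
  have hH : ∀ z > 0, HasDerivAt H
      (-(c / z ^ 2 * (u z - v z) ^ 2 * Real.exp (c * z⁻¹))) z := by
    intro z hz
    refine ((((hu z hz).pow 2).add ((hv z hz).pow 2)).mul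
      (((hasDerivAt_inv hz.ne').const_mul c).exp)).congr_deriv ?_
    simp only [Pi.add_apply, Pi.pow_apply]
    field_simp
    ring
  have hanti : AntitoneOn H (Ici 1) := by
    refine antitoneOn_of_deriv_nonpos (convex_Ici 1)
      (fun z hz => (hH z (lt_of_lt_of_le one_pos hz)).continuousAt.continuousWithinAt) ?_ ?_
    · intro z hz
      rw [interior_Ici] at hz
      exact (hH z (one_pos.trans hz)).differentiableAt.differentiableWithinAt
    · intro z hz
      rw [interior_Ici] at hz
      rw [(hH z (one_pos.trans hz)).deriv, neg_nonpos]
      positivity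
  have h1 := hanti (mem_Ici.2 le_rfl) (mem_Ici.2 hz) hz
  have h2 : u z ^ 2 ≤ H z := by
    have : 1 ≤ Real.exp (c * z⁻¹) := Real.one_le_exp (by positivity)
    simp only [H]
    nlinarith [sq_nonneg (u z), sq_nonneg (v z)]
  refine h2.trans (h1.trans_eq ?_)
  simp [H]

lemma abs_besselEntire_le {a : ℝ} (ha1 : -1 < a) (ha2 : a < 0) :
    ∃ C > 0, ∀ z > 0, |besselEntire ((a - 1) / 2) (z ^ 2 / 4)| ≤ C * (1 + z ^ (-a / 2)) := by
  set ν := (a - 1) / 2 with hν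
  have hν1 : -1 < ν := by linarith
  set f : ℝ → ℝ := fun z => besselEntire ν (z ^ 2 / 4)
  set f₁ : ℝ → ℝ := fun z => besselEntire (ν + 1) (z ^ 2 / 4)
  have hsq : ∀ z : ℝ, HasDerivAt (fun z : ℝ => z ^ 2 / 4) (z / 2) z := by
    intro z
    refine ((hasDerivAt_pow 2 z).div_const 4).congr_deriv ?_
    push_cast
    ring
  have hf : ∀ z, HasDerivAt f (-f₁ z * (z / 2)) z := fun z =>
    (hasDerivAt_besselEntire hν1 _).comp z (hsq z)
  have hf₁ : ∀ z, HasDerivAt f₁ (-besselEntire (ν + 2) (z ^ 2 / 4) * (z / 2)) z := by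
    intro z
    have := (hasDerivAt_besselEntire (μ := ν + 1) (by linarith) _).comp z (hsq z)
    rwa [show ν + 1 + 1 = ν + 2 by ring] at this
  set u : ℝ → ℝ := fun z => z ^ (a / 2) * f z
  set v : ℝ → ℝ := fun z => z ^ (a / 2) * (a / 2 * z⁻¹ * f z - z / 2 * f₁ z)
  have hpow : ∀ z : ℝ, 0 < z →
      HasDerivAt (fun z : ℝ => z ^ (a / 2)) (z ^ (a / 2) * (a / 2 * z⁻¹)) z := by
    intro z hz
    refine (Real.hasDerivAt_rpow_const (p := a / 2) (Or.inl hz.ne')).congr_deriv ?_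
    rw [Real.rpow_sub_one hz.ne']
    ring
  have hu : ∀ z > 0, HasDerivAt u (v z) z := by
    intro z hz
    refine ((hpow z hz).mul (hf z)).congr_deriv ?_
    simp only [v]
    ring
  have hv : ∀ z > 0, HasDerivAt v ((a / 2 * (a / 2 - 1) / z ^ 2 - 1) * u z) z := by
    intro z hz
    have hrec := besselEntire_recurrence hν1 (z ^ 2 / 4)
    refine ((hpow z hz).mul ((((hasDerivAt_inv hz.ne').const_mul (a / 2)).mul (hf z)).sub
      (((hasDerivAt_id z).div_const 2).mul (hf₁ z)))).congr_deriv ?_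
    simp only [u, id, Pi.sub_apply, Pi.mul_apply]
    change _ = (ν + 1) * f₁ z - f z at hrec
    generalize besselEntire (ν + 2) (z ^ 2 / 4) = G at hrec ⊢
    rw [hν] at hrec
    field_simp
    field_simp at hrec
    linear_combination z ^ 2 / 2 * hrec
  have hc : 0 ≤ a / 2 * (a / 2 - 1) := by nlinarith
  obtain ⟨B, hB⟩ := (isCompact_Icc (a := (0 : ℝ)) (b := 1)).exists_bound_of_continuousOn
    (f := f) fun z _ => (hf z).continuousAt.continuousWithinAt
  set D := Real.sqrt ((u 1 ^ 2 + v 1 ^ 2) * Real.exp (a / 2 * (a / 2 - 1)))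
  have hB0 : 0 ≤ B := (norm_nonneg _).trans (hB 0 (by simp))
  have hD0 : 0 ≤ D := Real.sqrt_nonneg _
  refine ⟨B + D + 1, by positivity, fun z hz => ?_⟩
  have hp : 0 < z ^ (-a / 2) := Real.rpow_pos_of_pos hz _
  rcases le_total z 1 with h | h
  · have := hB z ⟨hz.le, h⟩
    rw [Real.norm_eq_abs] at this
    change |f z| ≤ _
    nlinarith
  · have h1 : |u z| ≤ D := Real.abs_le_sqrt (sq_le_of_second_order_ode hc hu hv h)
    have h2 : f z = z ^ (-a / 2) * u z := by
      simp only [u]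
      rw [← mul_assoc, ← Real.rpow_add hz]
      ring_nf
      simp
    change |f z| ≤ _
    rw [h2, abs_mul, abs_of_pos hp]
    nlinarith

lemma norm_besselJ {ν z : ℝ} (hz : 0 < z) :
    ‖besselJ (ν : ℂ) z‖ = (z / 2) ^ ν * |besselEntire ν (z ^ 2 / 4)| := by
  have h : besselJ (ν : ℂ) z = (((z / 2) ^ ν * besselEntire ν (z ^ 2 / 4) : ℝ) : ℂ) := by
    unfold besselJ besselEntire
    rw [← tsum_mul_left, Complex.ofReal_tsum]
    refine tsum_congr fun k => ?_
    have h1 : ((z : ℂ) / 2) ^ (2 * (k : ℂ) + ν) = (((z / 2) ^ ν * (z ^ 2 / 4) ^ k : ℝ) : ℂ) := by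
      have : (z / 2) ^ ν * (z ^ 2 / 4) ^ k = (z / 2) ^ (2 * (k : ℝ) + ν) := by
        rw [Real.rpow_add (by positivity), Real.rpow_mul (by positivity), Real.rpow_natCast,
          Real.rpow_two]
        ring
      rw [this, Complex.ofReal_cpow (by positivity)]
      push_cast
      rfl
    rw [h1]
    have g1 : Complex.Gamma (k + 1) = (Real.Gamma (k + 1) : ℂ) := by
      rw [← Complex.Gamma_ofReal]; push_cast; rfl
    have g2 : Complex.Gamma (ν + k + 1) = (Real.Gamma (ν + k + 1) : ℂ) := by
      rw [← Complex.Gamma_ofReal]; push_cast; rfl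
    rw [g1, g2, besselCoeff]
    push_cast
    ring
  rw [h, Complex.norm_real, Real.norm_eq_abs, abs_mul, abs_of_pos (by positivity)]

lemma norm_Skernel (a x y t : ℝ) (hz : 0 ≤ x * y / (2 * |t|)) :
    ‖Skernel a x y t‖ = (2 * |t|) ^ (-(a + 1) / 2) *
      ((x * y / (2 * |t|)) ^ ((1 - a) / 2) *
        ‖besselJ (((a - 1) / 2 : ℝ) : ℂ) (x * y / (2 * |t|))‖) := by
  have e (r : ℝ) : ‖Complex.exp (Complex.I * r)‖ = 1 := by
    rw [mul_comm]; exact Complex.norm_exp_ofReal_mul_I r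
  have e' (r : ℝ) : ‖Complex.exp (-Complex.I * r)‖ = 1 := by
    rw [neg_mul, ← mul_neg, ← Complex.ofReal_neg]; exact e _
  have h1 : 0 ≤ (2 * |t|) ^ (-(a + 1) / 2) := by positivity
  have h2 : 0 ≤ (x * y / (2 * |t|)) ^ ((1 - a) / 2) := Real.rpow_nonneg hz _
  unfold Skernel
  split_ifs
  all_goals
    simp only [norm_mul, e, e', Complex.norm_real, Real.norm_eq_abs, abs_of_nonneg h1,
      abs_of_nonneg h2]
    ring

lemma norm_Skernel_le_s9 {a : ℝ} (ha1 : -1 < a) (ha2 : a < 0) :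
    ∃ C > 0, ∀ t ≠ 0, ∀ x > 0, ∀ y > 0, ‖Skernel a x y t‖ ≤
      C * (|t| ^ (-(a + 1) / 2) + |t| ^ (-(1 : ℝ) / 2) * (x ^ (-a / 2) * y ^ (-a / 2))) := by
  obtain ⟨C, hC, hb⟩ := abs_besselEntire_le ha1 ha2
  refine ⟨2 ^ ((1 - a) / 2) * C, by positivity, fun t ht x hx y hy => ?_⟩
  have ht' : 0 < |t| := abs_pos.2 ht
  set w := 2 * |t| with hw
  have hw0 : 0 < w := by positivity
  set z := x * y / w with hz
  have hz0 : 0 < z := by positivity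
  rw [norm_Skernel a x y t hz0.le, norm_besselJ hz0]
  have e1 : z ^ ((1 - a) / 2) * ((z / 2) ^ ((a - 1) / 2)) = 2 ^ ((1 - a) / 2) := by
    rw [Real.div_rpow hz0.le (by norm_num), ← mul_div_assoc, ← Real.rpow_add hz0,
      show (1 - a) / 2 + (a - 1) / 2 = 0 by ring, Real.rpow_zero,
      show (1 - a) / 2 = -((a - 1) / 2) by ring, Real.rpow_neg (by norm_num), one_div]
  have e2 : w ^ (-(a + 1) / 2) * z ^ (-a / 2)
      = w ^ (-(1 : ℝ) / 2) * (x ^ (-a / 2) * y ^ (-a / 2)) := by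
    rw [hz, Real.div_rpow (by positivity) hw0.le, Real.mul_rpow hx.le hy.le,
      show -(a + 1) / 2 = -(1 : ℝ) / 2 + -a / 2 by ring, Real.rpow_add hw0]
    field_simp
  have hle : ∀ p : ℝ, p ≤ 0 → w ^ p ≤ |t| ^ p := fun p hp =>
    Real.rpow_le_rpow_of_nonpos ht' (by linarith) hp
  calc w ^ (-(a + 1) / 2) * (z ^ ((1 - a) / 2) *
        ((z / 2) ^ ((a - 1) / 2) * |besselEntire ((a - 1) / 2) (z ^ 2 / 4)|))
      = 2 ^ ((1 - a) / 2) * (w ^ (-(a + 1) / 2) *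
          |besselEntire ((a - 1) / 2) (z ^ 2 / 4)|) := by rw [← e1]; ring
    _ ≤ 2 ^ ((1 - a) / 2) * (w ^ (-(a + 1) / 2) * (C * (1 + z ^ (-a / 2)))) := by
        gcongr
        exact hb z hz0
    _ = 2 ^ ((1 - a) / 2) * C *
          (w ^ (-(a + 1) / 2) + w ^ (-(1 : ℝ) / 2) * (x ^ (-a / 2) * y ^ (-a / 2))) := by
        rw [← e2]; ring
    _ ≤ _ := by
        have h1 := hle (-(a + 1) / 2) (by linarith)
        have h2 := hle (-(1 : ℝ) / 2) (by norm_num)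
        exact mul_le_mul_of_nonneg_left
          (add_le_add h1 (mul_le_mul_of_nonneg_right h2 (by positivity))) (by positivity)

/-- Weighted dispersive estimate for `-1 < a < 0`:
`sup_{x>0} |S_a(t)φ(x) k₁(x)| ≤ C(a)(|t|^{-(a+1)/2} + |t|^{-1/2}) ∫₀^∞ |φ| u₁`. -/
theorem weighted_dispersive_estimate (a : ℝ) (ha1 : -1 < a) (ha2 : a < 0) :
    ∃ C > (0:ℝ), ∀ t : ℝ, t ≠ 0 → ∀ φ : ℝ → ℂ, Measurable φ →
      IntegrableOn (fun y => ‖φ y‖ * u1 a y) (Ioi 0) →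
      ∀ x > (0:ℝ),
        ‖Sop a t φ x‖ * k1 a x ≤
          C * (|t| ^ (-(a + 1) / 2) + |t| ^ (-(1:ℝ) / 2)) *
            ∫ y in Ioi (0:ℝ), ‖φ y‖ * u1 a y := by
  obtain ⟨C, hC, hS⟩ := norm_Skernel_le_s9 ha1 ha2
  refine ⟨C, hC, fun t ht φ _ hint x hx => ?_⟩
  have hk : 0 < k1 a x := lt_min one_pos (Real.rpow_pos_of_pos hx _)
  set M := C * (|t| ^ (-(a + 1) / 2) + |t| ^ (-(1:ℝ) / 2))
  rw [← le_div_iff₀ hk, mul_div_right_comm, ← integral_const_mul]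
  refine norm_integral_le_of_norm_le (hint.const_mul _) ?_
  filter_upwards [ae_restrict_mem measurableSet_Ioi] with y hy
  have hy0 : 0 < y := hy
  rw [norm_mul, norm_mul, Complex.norm_real, Real.norm_eq_abs,
    abs_of_pos (Real.rpow_pos_of_pos hy0 _), div_mul_eq_mul_div, le_div_iff₀ hk]
  have hA : 0 ≤ |t| ^ (-(a + 1) / 2) := by positivity
  have hB : 0 ≤ |t| ^ (-(1:ℝ) / 2) := by positivity
  have hxk : x ^ (-a / 2) * k1 a x ≤ 1 := by
    calc x ^ (-a / 2) * k1 a x ≤ x ^ (-a / 2) * x ^ (a / 2) := by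
          gcongr
          exact min_le_right _ _
      _ = 1 := by
          rw [← Real.rpow_add hx, show -a / 2 + a / 2 = 0 by ring, Real.rpow_zero]
  have hyy : y ^ (-a / 2) * y ^ a = y ^ (a / 2) := by
    rw [← Real.rpow_add hy0]
    ring_nf
  have hu1 : y ^ (a / 2) ≤ u1 a y := le_max_left _ _
  have hu2 : y ^ a ≤ u1 a y := le_max_right _ _
  have hk1 : k1 a x ≤ 1 := min_le_left _ _
  have hu0 : 0 ≤ u1 a y := (Real.rpow_pos_of_pos hy0 _).le.trans hu2
  calc ‖Skernel a x y t‖ * ‖φ y‖ * y ^ a * k1 a x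
      ≤ C * (|t| ^ (-(a + 1) / 2) + |t| ^ (-(1 : ℝ) / 2) * (x ^ (-a / 2) * y ^ (-a / 2))) *
          ‖φ y‖ * y ^ a * k1 a x := by
        gcongr
        exact hS t ht x hx y hy0
    _ = C * ‖φ y‖ * (|t| ^ (-(a + 1) / 2) * (y ^ a * k1 a x) +
          |t| ^ (-(1 : ℝ) / 2) * (y ^ (a / 2) * (x ^ (-a / 2) * k1 a x))) := by
        rw [← hyy]; ring
    _ ≤ C * ‖φ y‖ * (|t| ^ (-(a + 1) / 2) * (u1 a y * 1) +
          |t| ^ (-(1 : ℝ) / 2) * (u1 a y * 1)) := by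
        gcongr
    _ = M * (‖φ y‖ * u1 a y) := by
        simp only [M]; ring
end
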